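/- arXiv:0903.3151 — 2 statements merged into one kernel-verified Lean document; each statement's English description precedes it below -/
import Mathlib

section
/- For every integer r ≥ 5, every finite simple graph G that contains no clique on r−2 vertices and satisfies χ(G) ≥ r+1 has at least r+9 vertices; equivalently, the vertex Folkman number F_v(2_r; r−2) ≥ r+9. -/
open SimpleGraph

/-- The vertex Folkman number `F_v(2_r; q)`: the minimum number of vertices of a
`K_q`-free finite simple graph with chromatic number at least `r + 1`. -/
noncomputable def folkman (r q : ℕ) : ℕ :=
  sInf {n : ℕ | ∃ G : SimpleGraph (Fin n),
    G.CliqueFree q ∧ (r + 1 : ℕ∞) ≤ G.chromaticNumber}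

/-- The set of vertices moved by `f` (covered by the matching encoded by `f`). -/
def mvd {V : Type} [Fintype V] [DecidableEq V] (f : V → V) : Finset V :=
  Finset.univ.filter (fun v => f v ≠ v)

/-- A matching of `H` inside `W`, encoded as an involution. -/
def IsMt {V : Type} (H : SimpleGraph V) (W : Finset V) (f : V → V) : Prop :=
  (∀ v, f (f v) = v) ∧ ∀ v, f v ≠ v → v ∈ W ∧ H.Adj v (f v)

/-- Independent finset. -/
def Indp {V : Type} (H : SimpleGraph V) (I : Finset V) : Prop :=
  ∀ u ∈ I, ∀ v ∈ I, ¬ H.Adj u v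

section
variable {V : Type} [Fintype V] [DecidableEq V] {H : SimpleGraph V}

lemma mem_mvd {f : V → V} {v : V} : v ∈ mvd f ↔ f v ≠ v := by simp [mvd]

lemma isMt_id (W : Finset V) : IsMt H W id := ⟨fun _ => rfl, fun v h => (h rfl).elim⟩

lemma exists_max_mt (H : SimpleGraph V) (W : Finset V) :
    ∃ f, IsMt H W f ∧ ∀ g, IsMt H W g → (mvd g).card ≤ (mvd f).card := by
  haveI : Nonempty {f // IsMt H W f} := ⟨⟨id, isMt_id W⟩⟩
  obtain ⟨f, hf⟩ := Finite.exists_max (fun f : {f // IsMt H W f} => (mvd f.1).card)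
  exact ⟨f.1, f.2, fun g hg => hf ⟨g, hg⟩⟩

lemma add_edge {W : Finset V} {f : V → V} (hf : IsMt H W f) {x y : V}
    (hx : x ∈ W) (hy : y ∈ W) (hxy : H.Adj x y) (fx : f x = x) (fy : f y = y) :
    ∃ g, IsMt H W g ∧ (mvd f).card < (mvd g).card := by
  have hne := hxy.ne
  obtain ⟨h1, h2⟩ := hf
  refine ⟨fun t => if t = x then y else if t = y then x else f t, ⟨?_, ?_⟩, ?_⟩
  · intro v
    have := h1 v
    grind
  · intro v hv
    have := h2 v
    have := hxy.symm
    grind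
  · apply Finset.card_lt_card
    rw [Finset.ssubset_iff_of_subset]
    · exact ⟨x, by simp [mem_mvd, hne.symm], by simp [mem_mvd, fx]⟩
    · intro t ht
      rw [mem_mvd] at *
      grind

lemma exch {W : Finset V} {m : ℕ} (hmax : ∀ f, IsMt H W f → (mvd f).card ≤ m)
    {u v w : V} (huv : u ≠ v) {M : V → V} (hM : IsMt H W M) (hMm : (mvd M).card = m)
    (Mu : M u = u) (Mv : M v = v)
    (huw : ∀ f, IsMt H W f → (mvd f).card = m → f u = u → f w ≠ w)
    (hvw : ∀ f, IsMt H W f → (mvd f).card = m → f v = v → f w ≠ w) :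
    ∀ (d : ℕ) (N : V → V), (Finset.univ.filter (fun x => M x ≠ N x)).card = d →
      IsMt H W N → (mvd N).card = m → N w = w → False := by
  intro d
  induction d using Nat.strong_induction_on with
  | _ d ih =>
  intro N hd hN hNm Nw
  have Nu : N u ≠ u := fun h => huw N hN hNm h Nw
  have Nv : N v ≠ v := fun h => hvw N hN hNm h Nw
  have hc : (mvd M \ mvd N).card = (mvd N \ mvd M).card :=
    Finset.card_sdiff_comm (hMm.trans hNm.symm)
  have h2 : 1 < (mvd N \ mvd M).card := by
    rw [Finset.one_lt_card]
    exact ⟨u, by simp [mem_mvd, Nu, Mu], v, by simp [mem_mvd, Nv, Mv], huv⟩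
  rw [← hc] at h2
  obtain ⟨x, hx, hxw⟩ := Finset.exists_mem_ne h2 w
  simp only [Finset.mem_sdiff, mem_mvd, not_not] at hx
  obtain ⟨Mx, Nx⟩ := hx
  obtain ⟨y, hy⟩ : ∃ y, M x = y := ⟨_, rfl⟩
  have My : M y = x := by rw [← hy]; exact hM.1 x
  have hxy : H.Adj x y := hy ▸ (hM.2 x Mx).2
  have xW := (hM.2 x Mx).1
  have yW : y ∈ W := (hM.2 y (by rw [My]; exact hxy.ne)).1
  by_cases Ny : N y = y
  · obtain ⟨g, hg, hlt⟩ := add_edge hN xW yW hxy Nx Ny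
    have := hmax g hg
    omega
  obtain ⟨z, hz⟩ : ∃ z, N y = z := ⟨_, rfl⟩
  have Nz : N z = y := by rw [← hz]; exact hN.1 y
  have hne := hxy.ne
  have hzy : z ≠ y := hz ▸ Ny
  have hzx : z ≠ x := by rintro rfl; exact hne (Nx.symm.trans Nz)
  obtain ⟨h1, h2⟩ := hN
  obtain ⟨N', hN'⟩ : ∃ N' : V → V, N' =
    fun t => if t = x then y else if t = y then x else if t = z then z else N t := ⟨_, rfl⟩
  have hmv : mvd N' = insert x ((mvd N).erase z) := by
    ext t
    simp only [Finset.mem_insert, Finset.mem_erase, mem_mvd, hN']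
    grind
  refine ih _ ?_ N' rfl ⟨?_, ?_⟩ ?_ ?_
  · rw [← hd]
    apply Finset.card_lt_card
    rw [Finset.ssubset_iff_of_subset]
    · refine ⟨x, by simp [Nx, Mx], by simp [hN', hy]⟩
    · intro t ht
      simp only [Finset.mem_filter, Finset.mem_univ, true_and] at *
      have := hM.1 t
      clear ih hmax huw hvw hd hc hmv hMm hNm
      intro hMN
      apply ht
      rw [hN']
      by_cases h1 : t = x
      · simp [h1, hy]
      by_cases h2 : t = y
      · simp [h2, My, hne.symm]
      by_cases h3 : t = z
      · exfalso
        rw [h3, Nz] at hMN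
        rw [h3, hMN, My] at this
        exact hzx this.symm
      · simp [h1, h2, h3, hMN]
  · clear ih hmax huw hvw hd hc hmv hMm hNm
    intro t
    have := h1 t
    grind
  · clear ih hmax huw hvw hd hc hmv hMm hNm
    intro t ht
    have := h2 t
    have := hxy.symm
    grind
  · rw [hmv, Finset.card_insert_of_notMem (by simp [mem_mvd, Nx]),
      Finset.card_erase_of_mem (by rw [mem_mvd, Nz]; exact hzy.symm)]
    have : 0 < (mvd N).card := Finset.card_pos.2 ⟨y, by rw [mem_mvd]; exact Ny⟩
    omega
  · grind

lemma ramsey (hT : ∀ a b c, H.Adj a b → H.Adj b c → H.Adj a c → False) :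
    ∀ (k : ℕ) (W : Finset V), k * (k + 1) ≤ 2 * W.card →
      ∃ I ⊆ W, I.card = k ∧ Indp H I := by
  classical
  intro k
  induction k with
  | zero => intro W _; exact ⟨∅, by simp, rfl, by simp [Indp]⟩
  | succ k ih =>
  intro W hW
  have hpos : 0 < W.card := by
    by_contra h
    have : W.card = 0 := by omega
    rw [this] at hW
    nlinarith
  obtain ⟨v, hv⟩ := Finset.card_pos.1 hpos
  by_cases hd : k + 1 ≤ (W.filter (fun t => H.Adj v t)).card
  · obtain ⟨I, hI, hIc⟩ := Finset.exists_subset_card_eq hd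
    refine ⟨I, hI.trans (Finset.filter_subset _ _), hIc, ?_⟩
    intro a ha b hb hab
    have h1 := (Finset.mem_filter.1 (hI ha)).2
    have h2 := (Finset.mem_filter.1 (hI hb)).2
    exact hT v a b h1 hab h2
  · have hsplit := Finset.card_filter_add_card_filter_not (s := W) (fun t => H.Adj v t)
    have hmem : v ∈ W.filter (fun t => ¬ H.Adj v t) := by simp [hv]
    obtain ⟨I, hI, hIc, hIi⟩ := ih ((W.filter (fun t => ¬ H.Adj v t)).erase v) (by
      rw [Finset.card_erase_of_mem hmem]
      have : W.card ≤ k + (W.filter (fun t => ¬ H.Adj v t)).card := by omega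
      have h3 : 0 < (W.filter (fun t => ¬ H.Adj v t)).card := Finset.card_pos.2 ⟨v, hmem⟩
      obtain ⟨c, hc⟩ : ∃ c, (W.filter (fun t => ¬ H.Adj v t)).card = c + 1 :=
        ⟨_, (Nat.succ_pred_eq_of_pos h3).symm⟩
      rw [hc] at this ⊢
      simp only [Nat.add_sub_cancel]
      nlinarith)
    have hvI : v ∉ I := fun h => by simpa using hI h
    refine ⟨insert v I, ?_, by rw [Finset.card_insert_of_notMem hvI, hIc], ?_⟩
    · intro t ht
      rcases Finset.mem_insert.1 ht with rfl | ht
      · exact hv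
      · exact (Finset.mem_filter.1 (Finset.mem_of_mem_erase (hI ht))).1
    · have key : ∀ t ∈ I, ¬ H.Adj v t := fun t ht =>
        (Finset.mem_filter.1 (Finset.mem_of_mem_erase (hI ht))).2
      intro a ha b hb hab
      rcases Finset.mem_insert.1 ha with h1 | h1 <;> rcases Finset.mem_insert.1 hb with h2 | h2
      · exact hab.ne (h1.trans h2.symm)
      · exact key b h2 (h1 ▸ hab)
      · exact key a h1 (h2 ▸ hab.symm)
      · exact hIi a h1 b h2 hab

lemma even_color {W : Finset V} {f : V → V} (hf : IsMt H W f) :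
    ∃ m, (mvd f).card = 2 * m ∧ Hᶜ.Colorable (Fintype.card V - m) := by
  classical
  let e := Fintype.equivFin V
  let L := Finset.univ.filter (fun v => e (f v) < e v)
  let U := Finset.univ.filter (fun v => e v < e (f v))
  have hLU : L.card = U.card := by
    apply Finset.card_bij (fun v _ => f v)
    · intro a ha
      simpa [L, U, hf.1 a] using ha
    · intro a _ b _ h
      rw [← hf.1 a, h, hf.1 b]
    · intro b hb
      exact ⟨f b, by simpa [L, U, hf.1 b] using hb, hf.1 b⟩
  have hmv : mvd f = L ∪ U := by
    ext t
    simp only [mem_mvd, L, U, Finset.mem_union, Finset.mem_filter, Finset.mem_univ, true_and]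
    rw [lt_or_lt_iff_ne, ne_eq, ne_eq, e.injective.eq_iff]
  have hdis : Disjoint L U := by
    rw [Finset.disjoint_left]
    intro a ha hb
    simp only [L, U, Finset.mem_filter, Finset.mem_univ, true_and] at ha hb
    exact lt_asymm ha hb
  refine ⟨L.card, by rw [hmv, Finset.card_union_of_disjoint hdis]; omega, ?_⟩
  have hcard : Fintype.card {v // ¬ e (f v) < e v} = Fintype.card V - L.card := by
    rw [Fintype.card_subtype_compl, Fintype.card_subtype]
  rw [← hcard]
  apply Coloring.colorable
  refine Coloring.mk (fun v => if h : e (f v) < e v then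
    ⟨f v, by rw [hf.1 v]; exact h.not_gt⟩ else ⟨v, h⟩) ?_
  intro a b hab heq
  rw [compl_adj] at hab
  have hA := hf.2 a
  have hB := hf.2 b
  have h1 := hf.1 a
  have h2 := hf.1 b
  have := hab.2
  have h3 : ¬ H.Adj b a := fun h => hab.2 h.symm
  have h4 := hab.1
  split_ifs at heq <;> simp only [Subtype.mk.injEq] at heq <;> grind

lemma cover (hT : ∀ a b c, H.Adj a b → H.Adj b c → H.Adj a c → False) :
    ∀ (n : ℕ) (W : Finset V) (m : ℕ), W.card = n → m ≤ 7 →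
      (∀ f, IsMt H W f → (mvd f).card ≤ 2 * m) →
      ∃ I ⊆ W, W.card ≤ I.card + m + m / 2 ∧ Indp H I := by
  classical
  intro n
  induction n using Nat.strong_induction_on with
  | _ n ih =>
  intro W m hn hm hmax
  rcases W.eq_empty_or_nonempty with rfl | ⟨v0, hv0⟩
  · exact ⟨∅, by simp, by simp, by simp [Indp]⟩
  by_cases hcrit : ∃ v ∈ W, ∀ f, IsMt H (W.erase v) f → (mvd f).card ≠ 2 * m
  · obtain ⟨v, hv, hcr⟩ := hcrit
    have hsub : ∀ f, IsMt H (W.erase v) f → IsMt H W f := fun f hf =>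
      ⟨hf.1, fun t ht => ⟨Finset.mem_of_mem_erase (hf.2 t ht).1, (hf.2 t ht).2⟩⟩
    have hmpos : 0 < m := by
      have := hcr id (isMt_id _)
      simp [mvd] at this
      omega
    have hWc := Finset.card_erase_add_one hv
    obtain ⟨I, hI, hIc, hIi⟩ := ih (W.erase v).card (by omega) (W.erase v) (m - 1) rfl
      (by omega) (by
        intro f hf
        have h1 := hmax f (hsub f hf)
        have h2 := hcr f hf
        obtain ⟨p, hp, -⟩ := even_color hf
        omega)
    exact ⟨I, hI.trans (Finset.erase_subset _ _), by omega, hIi⟩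
  push Not at hcrit
  have hmiss : ∀ v ∈ W, ∃ f, IsMt H W f ∧ (mvd f).card = 2 * m ∧ f v = v := by
    intro v hv
    obtain ⟨f, hf, hfm⟩ := hcrit v hv
    refine ⟨f, ⟨hf.1, fun t ht => ⟨Finset.mem_of_mem_erase (hf.2 t ht).1, (hf.2 t ht).2⟩⟩, hfm, ?_⟩
    by_contra h
    simpa using (hf.2 v h).1
  let R : V → V → Prop := fun u v => u = v ∨
    ∀ f, IsMt H W f → (mvd f).card = 2 * m → f u = u → f v ≠ v
  have hRadj : ∀ u ∈ W, ∀ v ∈ W, H.Adj u v → R u v := by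
    intro u hu v hv huv
    right
    intro f hf hfm fu fv
    obtain ⟨g, hg, hlt⟩ := add_edge hf hu hv huv fu fv
    have := hmax g hg
    omega
  have hRtrans : ∀ u w v, w ∈ W → R u w → R w v → R u v := by
    intro u w v hw h1 h2
    rcases h1 with rfl | h1
    · exact h2
    rcases h2 with rfl | h2
    · exact Or.inr h1
    by_cases huv : u = v
    · exact Or.inl huv
    right
    intro M hM hMm Mu Mv
    obtain ⟨N, hN, hNm, Nw⟩ := hmiss w hw
    exact exch hmax huv hM hMm Mu Mv h1 (fun f hf hfm fv fw => h2 f hf hfm fw fv) _ N rfl hN hNm Nw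
  let A := W.filter (fun t => R v0 t)
  let B := W.filter (fun t => ¬ R v0 t)
  have hAB : A.card + B.card = W.card := Finset.card_filter_add_card_filter_not _
  have hv0A : v0 ∈ A := Finset.mem_filter.2 ⟨hv0, Or.inl rfl⟩
  have hApos : 0 < A.card := Finset.card_pos.2 ⟨v0, hv0A⟩
  have hAW : A ⊆ W := Finset.filter_subset _ _
  have hBW : B ⊆ W := Finset.filter_subset _ _
  have hdisj : ∀ t, t ∈ A → t ∈ B → False := by
    intro t h1 h2
    exact (Finset.mem_filter.1 h2).2 (Finset.mem_filter.1 h1).2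
  have hno : ∀ a ∈ A, ∀ b ∈ B, ¬ H.Adj a b := by
    intro a ha b hb hab
    apply (Finset.mem_filter.1 hb).2
    exact hRtrans v0 a b (hAW ha) (Finset.mem_filter.1 ha).2 (hRadj a (hAW ha) b (hBW hb) hab)
  rcases Nat.eq_zero_or_pos B.card with hB0 | hBpos
  · obtain ⟨f, hf, hfm, fv⟩ := hmiss v0 hv0
    have hmv : mvd f = W.erase v0 := by
      ext t
      rw [mem_mvd, Finset.mem_erase]
      constructor
      · intro ht
        exact ⟨fun h => ht (h ▸ fv), (hf.2 t ht).1⟩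
      · rintro ⟨hne, htW⟩
        have : t ∈ A := by
          by_contra hA
          have : t ∈ B := Finset.mem_filter.2 ⟨htW, fun h => hA (Finset.mem_filter.2 ⟨htW, h⟩)⟩
          rw [Finset.card_eq_zero.1 hB0] at this
          simp at this
        rcases (Finset.mem_filter.1 this).2 with h | h
        · exact (hne h.symm).elim
        · exact h f hf hfm fv
    have hWc := Finset.card_erase_add_one hv0
    rw [← hmv, hfm] at hWc
    obtain ⟨I, hI, hIc, hIi⟩ := ramsey hT (m + 1 - m / 2) W (by
      rw [← hWc]
      interval_cases m <;> norm_num)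
    exact ⟨I, hI, by omega, hIi⟩
  · obtain ⟨f, hf, hfmax⟩ := exists_max_mt H A
    obtain ⟨g, hg, hgmax⟩ := exists_max_mt H B
    obtain ⟨a, ha, -⟩ := even_color hf
    obtain ⟨b, hb, -⟩ := even_color hg
    have hfg : IsMt H W (fun t => if t ∈ A then f t else g t) := by
      have hfA : ∀ t ∈ A, f t ∈ A := by
        intro t ht
        by_cases h : f t = t
        · rwa [h]
        · exact (hf.2 (f t) (by rw [hf.1]; exact Ne.symm h)).1
      have hgA : ∀ t, t ∉ A → g t ∉ A := by
        intro t ht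
        by_cases h : g t = t
        · rwa [h]
        · exact fun h' => hdisj _ h' (hg.2 (g t) (by rw [hg.1]; exact Ne.symm h)).1
      constructor
      · intro t
        by_cases ht : t ∈ A
        · simp [ht, hfA t ht, hf.1]
        · simp [ht, hgA t ht, hg.1]
      · intro t
        by_cases ht : t ∈ A
        · simp only [ht, if_true]
          exact fun h => ⟨hAW ht, (hf.2 t h).2⟩
        · simp only [ht, if_false]
          exact fun h => ⟨hBW (hg.2 t h).1, (hg.2 t h).2⟩
    have hmv : mvd (fun t => if t ∈ A then f t else g t) = mvd f ∪ mvd g := by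
      ext t
      rw [Finset.mem_union, mem_mvd, mem_mvd, mem_mvd]
      have h1 := hf.2 t
      have h2 := hg.2 t
      have h3 := hdisj t
      by_cases ht : t ∈ A
      · simp only [ht, if_true]
        tauto
      · simp only [ht, if_false]
        tauto
    have hd : Disjoint (mvd f) (mvd g) := by
      rw [Finset.disjoint_left]
      intro t h1 h2
      exact hdisj t (hf.2 t (mem_mvd.1 h1)).1 (hg.2 t (mem_mvd.1 h2)).1
    have htot := hmax _ hfg
    rw [hmv, Finset.card_union_of_disjoint hd] at htot
    obtain ⟨I, hI, hIc, hIi⟩ := ih A.card (by omega) A a rfl (by omega)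
      (fun f' hf' => ha ▸ hfmax f' hf')
    obtain ⟨J, hJ, hJc, hJi⟩ := ih B.card (by omega) B b rfl (by omega)
      (fun f' hf' => hb ▸ hgmax f' hf')
    have hIJ : Disjoint I J := by
      rw [Finset.disjoint_left]
      exact fun t h1 h2 => hdisj t (hI h1) (hJ h2)
    refine ⟨I ∪ J, Finset.union_subset (hI.trans hAW) (hJ.trans hBW), ?_, ?_⟩
    · rw [Finset.card_union_of_disjoint hIJ]
      omega
    · intro s hs t ht hst
      rcases Finset.mem_union.1 hs with hs | hs <;> rcases Finset.mem_union.1 ht with ht | ht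
      · exact hIi s hs t ht hst
      · exact hno s (hI hs) t (hJ ht) hst
      · exact hno t (hI ht) s (hJ hs) hst.symm
      · exact hJi s hs t ht hst

end

lemma main_bound : ∀ (k : ℕ), k ≤ 4 → ∀ (V : Type) [Fintype V] (G : SimpleGraph V) (c : ℕ),
    Fintype.card V ≤ c + 2 * k → (∀ s : Finset V, G.IsClique s → s.card + k ≤ c + 1) →
    G.Colorable c := by
  classical
  intro k
  induction k with
  | zero =>
    intro _ V _ G c hc _
    exact (colorable_of_fintype G).mono (by omega)
  | succ k ih =>
  intro hk V _ G c hc hcl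
  by_cases hT : ∃ x y z : V, x ≠ y ∧ y ≠ z ∧ x ≠ z ∧ ¬ G.Adj x y ∧ ¬ G.Adj y z ∧ ¬ G.Adj x z
  · obtain ⟨x, y, z, hxy, hyz, hxz, axy, ayz, axz⟩ := hT
    have hc1 : 1 + (k + 1) ≤ c + 1 := by simpa using hcl {x} (by simp)
    obtain ⟨c, rfl⟩ : ∃ c', c = c' + 1 := ⟨c - 1, by omega⟩
    let I : Finset V := {x, y, z}
    have hI : I.card = 3 := Finset.card_eq_three.2 ⟨x, y, z, hxy, hxz, hyz, rfl⟩
    have hsub : (G.comap (Subtype.val : {v // v ∉ I} → V)).Colorable c := by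
      apply ih (by omega)
      · rw [Fintype.card_subtype_compl, Fintype.card_coe, hI]
        omega
      · intro s hs
        have := hcl (s.map (Function.Embedding.subtype _)) (by
          intro a ha b hb hab
          simp only [Finset.coe_map, Set.mem_image, Finset.mem_coe] at ha hb
          obtain ⟨a', ha', rfl⟩ := ha
          obtain ⟨b', hb', rfl⟩ := hb
          exact hs ha' hb' (fun h => hab (by rw [h])))
        rw [Finset.card_map] at this
        omega
    obtain ⟨C⟩ := hsub
    refine ⟨Coloring.mk (fun v => if h : v ∉ I then (C ⟨v, h⟩).castSucc else Fin.last c) ?_⟩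
    intro a b hab heq
    by_cases ha : a ∈ I <;> by_cases hb : b ∈ I
    · have h1 := hab.symm
      have h3 : ∀ p q, ¬ G.Adj p q → ¬ G.Adj q p := fun p q h h' => h h'.symm
      have h4 := h3 _ _ axy
      have h5 := h3 _ _ ayz
      have h6 := h3 _ _ axz
      have h2 := hab.ne
      simp only [I, Finset.mem_insert, Finset.mem_singleton] at ha hb
      grind
    · simp only [ha, hb, not_true_eq_false, not_false_eq_true, dite_true, dite_false] at heq
      exact (Fin.castSucc_lt_last _).ne heq.symm
    · simp only [ha, hb, not_true_eq_false, not_false_eq_true, dite_true, dite_false] at heq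
      exact (Fin.castSucc_lt_last _).ne heq
    · simp [ha, hb] at heq
      exact C.valid (v := ⟨a, ha⟩) (w := ⟨b, hb⟩) hab heq
  · by_contra hcol
    have hT' : ∀ a b c, Gᶜ.Adj a b → Gᶜ.Adj b c → Gᶜ.Adj a c → False := by
      intro a b c h1 h2 h3
      rw [compl_adj] at h1 h2 h3
      exact hT ⟨a, b, c, h1.1, h2.1, h3.1, h1.2, h2.2, h3.2⟩
    obtain ⟨f, hf, hfmax⟩ := exists_max_mt Gᶜ Finset.univ
    obtain ⟨m, hm, hmc⟩ := even_color hf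
    rw [compl_compl] at hmc
    have h1 : c < Fintype.card V - m := by
      by_contra h
      exact hcol (hmc.mono (by omega))
    obtain ⟨I, -, hIc, hIi⟩ := cover hT' _ Finset.univ m rfl (by omega)
      (fun g hg => hm ▸ hfmax g hg)
    have := hcl I (by
      intro a ha b hb hab
      by_contra h
      exact hIi a ha b hb ((compl_adj _ _ _).2 ⟨hab, h⟩))
    rw [Finset.card_univ] at hIc
    omega

lemma part_one (r : ℕ) (hr : 5 ≤ r) (V : Type) [Fintype V] (G : SimpleGraph V)
    (hG : G.CliqueFree (r - 2)) (hchi : (r + 1 : ℕ∞) ≤ G.chromaticNumber) :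
    r + 9 ≤ Fintype.card V := by
  by_contra hlt
  have hcol : G.Colorable r := by
    apply main_bound 4 le_rfl V G r (by omega)
    intro s hs
    by_contra h
    obtain ⟨t, ht, htc⟩ := Finset.exists_subset_card_eq (s := s) (n := r - 2) (by omega)
    exact hG t ⟨hs.subset (by exact_mod_cast ht), htc⟩
  have h := hchi.trans (chromaticNumber_le_iff_colorable.2 hcol)
  have h' : r + 1 ≤ r := by exact_mod_cast h
  omega

/-- The shift graph. -/
def shiftG (N : ℕ) : SimpleGraph {p : Fin N × Fin N // p.1 < p.2} where
  Adj p q := p.1.2 = q.1.1 ∨ q.1.2 = p.1.1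
  symm := ⟨fun _ _ h => h.symm⟩
  loopless := ⟨fun p h => by
    have := p.2
    rcases h with h | h <;> exact absurd h this.ne'⟩

lemma shift_free (N : ℕ) : (shiftG N).CliqueFree 3 := by
  classical
  intro s hs
  rw [is3Clique_iff] at hs
  obtain ⟨⟨⟨a1, a2⟩, ha⟩, ⟨⟨b1, b2⟩, hb⟩, ⟨⟨c1, c2⟩, hc⟩, h1, h2, h3, -⟩ := hs
  simp only [shiftG] at h1 h2 h3
  simp only at ha hb hc
  omega

lemma shift_col (N c : ℕ) (h : (shiftG N).Colorable c) : N ≤ 2 ^ c := by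
  classical
  obtain ⟨C⟩ := h
  let S : Fin N → Finset (Fin c) := fun i =>
    Finset.univ.filter (fun x => ∃ (j : Fin N) (hij : i < j), C ⟨(i, j), hij⟩ = x)
  have key : ∀ i j : Fin N, i < j → S i ≠ S j := by
    intro i j hij heq
    have h1 : C ⟨(i, j), hij⟩ ∈ S i := by
      simp only [S, Finset.mem_filter, Finset.mem_univ, true_and]
      exact ⟨j, hij, rfl⟩
    rw [heq] at h1
    simp only [S, Finset.mem_filter, Finset.mem_univ, true_and] at h1
    obtain ⟨l, hjl, hl⟩ := h1
    exact C.valid (v := ⟨(j, l), hjl⟩) (w := ⟨(i, j), hij⟩) (Or.inr rfl) hl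
  have hinj : Function.Injective S := by
    intro i j heq
    rcases lt_trichotomy i j with h | h | h
    · exact (key i j h heq).elim
    · exact h
    · exact (key j i h heq.symm).elim
  simpa using Fintype.card_le_of_injective S hinj

lemma folkman_nonempty (r : ℕ) (hr : 5 ≤ r) :
    {n : ℕ | ∃ G : SimpleGraph (Fin n),
      G.CliqueFree (r - 2) ∧ (r + 1 : ℕ∞) ≤ G.chromaticNumber}.Nonempty := by
  classical
  let G := shiftG (2 ^ r + 1)
  let e := Fintype.equivFin {p : Fin (2 ^ r + 1) × Fin (2 ^ r + 1) // p.1 < p.2}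
  let i : G.comap e.symm ≃g G := Iso.comap e.symm G
  refine ⟨_, G.comap e.symm, ?_, ?_⟩
  · exact ((shift_free _).comap ⟨i.toEmbedding.toCopy⟩).mono (by omega)
  · by_contra h
    have hlt : (G.comap e.symm).chromaticNumber < (r + 1 : ℕ∞) := not_le.1 h
    have hle : (G.comap e.symm).chromaticNumber ≤ (r : ℕ∞) := Order.le_of_lt_add_one hlt
    have := shift_col _ _ ((chromaticNumber_le_iff_colorable.1 hle).of_hom i.symm.toHom)
    omega

theorem stmt_3 (r : ℕ) (hr : 5 ≤ r) :
    (∀ (V : Type) [Fintype V] (G : SimpleGraph V),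
        G.CliqueFree (r - 2) → (r + 1 : ℕ∞) ≤ G.chromaticNumber →
        r + 9 ≤ Fintype.card V) ∧
    r + 9 ≤ folkman r (r - 2) := by
  refine ⟨fun V _ G h1 h2 => part_one r hr V G h1 h2, ?_⟩
  obtain ⟨G, h1, h2⟩ := Nat.sInf_mem (folkman_nonempty r hr)
  have := part_one r hr _ G h1 h2
  rwa [Fintype.card_fin] at this
end

section
/- For every integer r ≥ 8, the vertex Folkman number F_v(2_r; r−2) equals r+9; that is, every K_{r−2}-free finite simple graph G with χ(G) ≥ r+1 has at least r+9 vertices, and there exists a K_{r−2}-free finite simple graph on exactly r+9 vertices with chromatic number at least r+1. -/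
open SimpleGraph

namespace FolkmanAux

open Finset

/-- Colorability of the subgraph on `s`. -/
def ColS {V : Type} (G : SimpleGraph V) (s : Finset V) (m : ℕ) : Prop :=
  ∃ c : V → ℕ, (∀ x ∈ s, c x < m) ∧ ∀ x ∈ s, ∀ y ∈ s, G.Adj x y → c x ≠ c y

/-- `σ` is (the involution of) a matching of `H` inside `s`. -/
def IsM {V : Type} (H : SimpleGraph V) (s : Finset V) (σ : Equiv.Perm V) : Prop :=
  (∀ x, σ (σ x) = x) ∧ ∀ x, σ x ≠ x → x ∈ s ∧ H.Adj x (σ x)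

section
variable {V : Type} [Fintype V] [DecidableEq V]

theorem col_mono {G : SimpleGraph V} {s : Finset V} {m m' : ℕ} (h : m ≤ m')
    (hc : ColS G s m) : ColS G s m' := by
  obtain ⟨c, h1, h2⟩ := hc
  exact ⟨c, fun x hx => lt_of_lt_of_le (h1 x hx) h, h2⟩

theorem col_add {G : SimpleGraph V} {s I : Finset V} {m : ℕ}
    (hI : ∀ x ∈ I, ∀ y ∈ I, ¬ G.Adj x y) (hc : ColS G (s \ I) m) : ColS G s (m + 1) := by
  obtain ⟨c, h1, h2⟩ := hc
  refine ⟨fun x => if x ∈ I then m else c x, ?_, ?_⟩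
  · intro x hx
    by_cases h : x ∈ I
    · simp [h]
    · have := h1 x (by simp [hx, h])
      simp [h]; omega
  · intro x hx y hy hxy
    by_cases h : x ∈ I <;> by_cases h' : y ∈ I
    · exact absurd hxy (hI x h y h')
    · have := h1 y (by simp [hy, h'])
      simp [h, h']; omega
    · have := h1 x (by simp [hx, h])
      simp [h, h']; omega
    · simpa [h, h'] using h2 x (by simp [hx, h]) y (by simp [hy, h']) hxy

theorem col_card (G : SimpleGraph V) (s : Finset V) : ColS G s s.card := by
  induction s using Finset.induction_on with
  | empty => exact ⟨fun _ => 0, by simp, by simp⟩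
  | insert a s ha ih =>
    rw [Finset.card_insert_of_notMem ha]
    apply col_add (I := {a})
    · simp
    · have : insert a s \ {a} = s := by
        ext x; simp only [mem_sdiff, mem_insert, mem_singleton]
        constructor
        · tauto
        · intro h; refine ⟨Or.inr h, ?_⟩; rintro rfl; exact ha h
      rwa [this]

theorem col_matching (G : SimpleGraph V) (σ : Equiv.Perm V) (hσ : ∀ x, σ (σ x) = x)
    (hadj : ∀ x, σ x ≠ x → ¬ G.Adj x (σ x)) (k : ℕ) :
    ∀ s : Finset V, (∀ x ∈ s, σ x ∈ s) → (s.filter (fun x => σ x ≠ x)).card = 2 * k →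
      ColS G s (s.card - k) := by
  induction k with
  | zero => intro s _ _; exact col_card G s
  | succ k ih =>
    intro s hs hk
    obtain ⟨x, hx⟩ : (s.filter (fun x => σ x ≠ x)).Nonempty := by
      rw [← Finset.card_pos]; omega
    have hx' := Finset.mem_filter.1 hx
    have hne : x ≠ σ x := fun h => hx'.2 h.symm
    have hsub : ({x, σ x} : Finset V) ⊆ s := by
      intro y hy
      simp only [mem_insert, mem_singleton] at hy
      rcases hy with rfl | rfl
      · exact hx'.1
      · exact hs _ hx'.1
    have hsub2 : ({x, σ x} : Finset V) ⊆ s.filter (fun x => σ x ≠ x) := by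
      intro y hy
      refine Finset.mem_filter.2 ⟨hsub hy, ?_⟩
      simp only [mem_insert, mem_singleton] at hy
      rcases hy with rfl | rfl
      · exact hx'.2
      · rw [hσ]; exact hne
    have c2 : ({x, σ x} : Finset V).card = 2 := Finset.card_pair hne
    have e : (s \ {x, σ x}).filter (fun x => σ x ≠ x) =
        s.filter (fun x => σ x ≠ x) \ {x, σ x} := by
      ext y; simp only [mem_filter, mem_sdiff]; tauto
    have h1 : ((s \ {x, σ x}).filter (fun x => σ x ≠ x)).card = 2 * k := by
      rw [e, Finset.card_sdiff_of_subset hsub2, hk, c2]; omega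
    have h2 := ih (s \ {x, σ x}) (by
      intro y hy
      simp only [mem_sdiff, mem_insert, mem_singleton, not_or] at hy ⊢
      refine ⟨hs y hy.1, ?_, ?_⟩
      · intro h; apply hy.2.2; rw [← h, hσ]
      · intro h; exact hy.2.1 (σ.injective h)) h1
    have h3 : (s \ {x, σ x}).card = s.card - 2 := by
      rw [Finset.card_sdiff_of_subset hsub, c2]
    have h4 : 2 * (k + 1) ≤ s.card := hk ▸ Finset.card_filter_le _ _
    have h5 := col_add (s := s) (I := {x, σ x}) (by
      intro a ha b hb
      simp only [mem_insert, mem_singleton] at ha hb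
      rcases ha with rfl | rfl <;> rcases hb with rfl | rfl
      · simp
      · exact hadj _ hx'.2
      · exact fun h => hadj _ hx'.2 h.symm
      · simp) h2
    exact col_mono (by omega) h5

theorem ramsey (H : SimpleGraph V) (q : ℕ) : ∀ s : Finset V,
    (∀ x ∈ s, ∀ y ∈ s, ∀ z ∈ s, H.Adj x y → H.Adj x z → ¬ H.Adj y z) →
    q * (q + 1) ≤ 2 * s.card →
    ∃ t ⊆ s, t.card = q ∧ ∀ x ∈ t, ∀ y ∈ t, ¬ H.Adj x y := by
  classical
  induction q with
  | zero => intro s _ _; exact ⟨∅, by simp, by simp, by simp⟩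
  | succ q ih =>
    intro s htf hc
    obtain ⟨v, hv⟩ : s.Nonempty := by
      rw [← Finset.card_pos]; nlinarith
    by_cases hN : q + 1 ≤ (s.filter (H.Adj v)).card
    · obtain ⟨t, ht, htc⟩ := Finset.exists_subset_card_eq hN
      refine ⟨t, fun x hx => (Finset.mem_filter.1 (ht hx)).1, htc, ?_⟩
      intro x hx y hy
      have hx' := Finset.mem_filter.1 (ht hx)
      have hy' := Finset.mem_filter.1 (ht hy)
      exact htf v hv x hx'.1 y hy'.1 hx'.2 hy'.2
    · have hR : (s \ insert v (s.filter (H.Adj v))).card + (q + 1) ≥ s.card := by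
        have h1 := Finset.le_card_sdiff (insert v (s.filter (H.Adj v))) s
        have h2 := Finset.card_insert_le v (s.filter (H.Adj v))
        omega
      obtain ⟨t, ht, htc, hti⟩ := ih (s \ insert v (s.filter (H.Adj v)))
        (fun x hx y hy z hz => htf x (mem_sdiff.1 hx).1 y (mem_sdiff.1 hy).1 z (mem_sdiff.1 hz).1)
        (by nlinarith)
      have key : ∀ x ∈ t, x ∈ s ∧ x ≠ v ∧ ¬ H.Adj v x := by
        intro x hx
        have := mem_sdiff.1 (ht hx)
        simp only [mem_insert, mem_filter, not_or, not_and] at this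
        exact ⟨this.1, this.2.1, this.2.2 this.1⟩
      refine ⟨insert v t, ?_, ?_, ?_⟩
      · intro x hx
        rcases mem_insert.1 hx with rfl | hx
        · exact hv
        · exact (key x hx).1
      · rw [Finset.card_insert_of_notMem, htc]
        intro h; exact (key v h).2.1 rfl
      · intro x hx y hy
        rcases mem_insert.1 hx with hx | hx <;> rcases mem_insert.1 hy with hy | hy
        · rw [hx, hy]; exact H.loopless.irrefl _
        · rw [hx]; exact (key y hy).2.2
        · rw [hy]; exact fun h => (key x hx).2.2 h.symm
        · exact hti x hx y hy

theorem IsM.even {H : SimpleGraph V} {s : Finset V} {σ : Equiv.Perm V} (h : IsM H s σ) :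
    2 ∣ σ.support.card := by
  apply Equiv.Perm.two_dvd_card_support
  ext x; simp [pow_two, h.1]

theorem IsM.mono {H : SimpleGraph V} {s s' : Finset V} {σ : Equiv.Perm V} (h : IsM H s σ)
    (hs : s ⊆ s') : IsM H s' σ :=
  ⟨h.1, fun x hx => ⟨hs (h.2 x hx).1, (h.2 x hx).2⟩⟩

theorem IsM.one (H : SimpleGraph V) (s : Finset V) : IsM H s 1 :=
  ⟨by simp, by simp⟩

theorem IsM.mul {H : SimpleGraph V} {s : Finset V} {σ τ : Equiv.Perm V} (h : IsM H s σ)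
    (h' : IsM H s τ) (hd : Equiv.Perm.Disjoint σ τ) : IsM H s (σ * τ) := by
  have hcom := hd.commute
  have hap : ∀ y, σ (τ y) = τ (σ y) := fun y => by
    have := congrArg (fun f : Equiv.Perm V => f y) hcom.eq
    simpa using this
  constructor
  · intro x
    simp only [Equiv.Perm.coe_mul, Function.comp]
    rw [hap x, h'.1, h.1]
  · intro x hx
    simp only [Equiv.Perm.coe_mul, Function.comp] at hx ⊢
    rcases hd x with h1 | h1
    · rw [hap, h1] at hx ⊢
      exact h'.2 x hx
    · rw [h1] at hx ⊢
      exact h.2 x hx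

theorem IsM.swap {H : SimpleGraph V} {s : Finset V} {u v : V} (hu : u ∈ s) (hv : v ∈ s)
    (huv : H.Adj u v) : IsM H s (Equiv.swap u v) := by
  constructor
  · intro x; simp
  · intro x hx
    by_cases h1 : x = u
    · subst h1; simp [hu, huv]
    · by_cases h2 : x = v
      · subst h2; simp [hv, huv.symm]
      · exact absurd (Equiv.swap_apply_of_ne_of_ne h1 h2) hx

theorem IsM.extend {H : SimpleGraph V} {s : Finset V} {σ : Equiv.Perm V} (h : IsM H s σ)
    {u v : V} (hu : u ∈ s) (hv : v ∈ s) (huv : H.Adj u v) (h1 : σ u = u) (h2 : σ v = v) :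
    ∃ τ, IsM H s τ ∧ τ.support.card = σ.support.card + 2 := by
  have hd : Equiv.Perm.Disjoint σ (Equiv.swap u v) := by
    intro x
    by_cases e1 : x = u
    · subst e1; exact Or.inl h1
    · by_cases e2 : x = v
      · subst e2; exact Or.inl h2
      · exact Or.inr (Equiv.swap_apply_of_ne_of_ne e1 e2)
  exact ⟨_, h.mul (IsM.swap hu hv huv) hd, by
    rw [hd.card_support_mul, Equiv.Perm.card_support_swap huv.ne]⟩

theorem gallai_trans {H : SimpleGraph V} {s : Finset V} {ν : ℕ}
    (hmax : ∀ σ, IsM H s σ → σ.support.card ≤ 2 * ν)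
    {M : Equiv.Perm V} (hM : IsM H s M) (hMc : M.support.card = 2 * ν) {u v t : V}
    (huv : u ≠ v) (hMu : M u = u) (hMv : M v = v)
    (hN0 : ∃ N, IsM H s N ∧ N.support.card = 2 * ν ∧ N t = t)
    (htu : ∀ N, IsM H s N → N.support.card = 2 * ν → N t = t → N u ≠ u)
    (htv : ∀ N, IsM H s N → N.support.card = 2 * ν → N t = t → N v ≠ v) : False := by
  classical
  let S : Finset (Equiv.Perm V) :=
    univ.filter (fun N => IsM H s N ∧ N.support.card = 2 * ν ∧ N t = t)
  have hS : S.Nonempty := by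
    obtain ⟨N, hN⟩ := hN0
    exact ⟨N, by simp only [S, mem_filter, mem_univ, true_and]; exact hN⟩
  obtain ⟨N, hNS, hNmax⟩ := Finset.exists_max_image S
    (fun N => (univ.filter (fun w => M w ≠ w ∧ M w = N w)).card) hS
  simp only [S, mem_filter, mem_univ, true_and] at hNS hNmax
  obtain ⟨hN, hNc, hNt⟩ := hNS
  have hNu := htu N hN hNc hNt
  have hNv := htv N hN hNc hNt
  have hcard : (M.support \ N.support).card = (N.support \ M.support).card :=
    Finset.card_sdiff_comm (hMc.trans hNc.symm)
  have h2 : 1 < (M.support \ N.support).card := by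
    rw [hcard, Finset.one_lt_card]
    exact ⟨u, by simp [hNu, hMu], v, by simp [hNv, hMv], huv⟩
  obtain ⟨x, hx, hxt⟩ := Finset.exists_mem_ne h2 t
  simp only [mem_sdiff, Equiv.Perm.mem_support, ne_eq, not_not] at hx
  obtain ⟨hMx, hNx⟩ := hx
  obtain ⟨hxs, hxy⟩ := hM.2 x hMx
  have hys : M x ∈ s := (hM.2 (M x) (by rw [hM.1]; exact fun h => hMx h.symm)).1
  by_cases hNy : N (M x) = M x
  · obtain ⟨τ, hτ, hτc⟩ := hN.extend hxs hys hxy hNx hNy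
    have := hmax τ hτ
    omega
  · obtain ⟨y, rfl⟩ : ∃ y, y = M x := ⟨_, rfl⟩
    generalize hy : M x = y at *
    generalize hz : N y = z at *
    have hMy : M y = x := by rw [← hy, hM.1]
    have hNz : N z = y := by rw [← hz, hN.1]
    have hzx : z ≠ x := by
      rintro rfl
      rw [hNx] at hNz
      exact hMx (by rw [hNz])
    have hyx : y ≠ x := hMx
    have hyz : z ≠ y := hNy
    have hty : t ≠ y := by rintro rfl; exact hNy (hz ▸ hNt)
    have htz : t ≠ z := by rintro rfl; exact hty (hNt ▸ hNz)
    let N' : Equiv.Perm V := Equiv.swap x z * N * (Equiv.swap x z)⁻¹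
    have ap : ∀ w, N' w = Equiv.swap x z (N (Equiv.swap x z w)) := by
      intro w; simp [N']
    have apx : N' x = y := by
      rw [ap, Equiv.swap_apply_left, hNz, Equiv.swap_apply_of_ne_of_ne hyx hyz.symm]
    have apy : N' y = x := by
      rw [ap, Equiv.swap_apply_of_ne_of_ne hyx hyz.symm, hz, Equiv.swap_apply_right]
    have apz : N' z = z := by
      rw [ap, Equiv.swap_apply_right, hNx, Equiv.swap_apply_left]
    have apo : ∀ w, w ≠ x → w ≠ y → w ≠ z → N' w = N w := by
      intro w h1 h2 h3
      rw [ap, Equiv.swap_apply_of_ne_of_ne h1 h3, Equiv.swap_apply_of_ne_of_ne]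
      · intro h; apply h1; rw [← hN.1 w, h, hNx]
      · intro h; apply h2; rw [← hN.1 w, h, hNz]
    have hN' : IsM H s N' := by
      constructor
      · intro w; rw [ap, ap]; simp [hN.1]
      · intro w hw
        by_cases h1 : w = x
        · subst h1; rw [apx]; exact ⟨hxs, hxy⟩
        by_cases h2 : w = y
        · subst h2; rw [apy]; exact ⟨hys, hxy.symm⟩
        by_cases h3 : w = z
        · subst h3; exact absurd apz hw
        rw [apo w h1 h2 h3] at hw ⊢
        exact hN.2 w hw
    have hN'c : N'.support.card = 2 * ν := by
      rw [← hNc]; exact Equiv.Perm.card_support_conj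
    have hN't : N' t = t := by rw [apo t hxt.symm hty htz, hNt]
    have := hNmax N' ⟨hN', hN'c, hN't⟩
    apply absurd this
    rw [not_le]
    apply Finset.card_lt_card
    rw [Finset.ssubset_iff_of_subset]
    · refine ⟨x, ?_, ?_⟩
      · simp only [mem_filter, mem_univ, true_and]
        rw [hy, apx]; exact ⟨hyx, rfl⟩
      · simp only [mem_filter, mem_univ, true_and]
        rw [hy, hNx]; tauto
    · intro w hw
      simp only [mem_filter, mem_univ, true_and] at hw ⊢
      refine ⟨hw.1, ?_⟩
      by_cases h1 : w = x
      · subst h1; rw [apx, hy]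
      by_cases h2 : w = y
      · subst h2; rw [apy, hMy]
      by_cases h3 : w = z
      · subst h3
        exfalso
        have h := hw.2
        rw [hNz] at h
        apply hzx
        rw [← hM.1 w, h, hMy]
      rw [apo w h1 h2 h3]; exact hw.2

theorem exists_max_matching (H : SimpleGraph V) (s : Finset V) :
    ∃ μ, ∃ σ, IsM H s σ ∧ σ.support.card = 2 * μ ∧
      ∀ τ, IsM H s τ → τ.support.card ≤ 2 * μ := by
  classical
  obtain ⟨σ, hσ, hmax⟩ := Finset.exists_max_image
    (univ.filter (fun N : Equiv.Perm V => IsM H s N)) (fun N => N.support.card)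
    ⟨1, by simp [IsM.one]⟩
  simp only [mem_filter, mem_univ, true_and] at hσ hmax
  obtain ⟨μ, hμ⟩ := hσ.even
  exact ⟨μ, σ, hσ, hμ, fun τ hτ => hμ ▸ hmax τ hτ⟩

theorem matching_main (H : SimpleGraph V) (n : ℕ) : ∀ (s : Finset V) (ν : ℕ), s.card = n →
    ν ≤ 7 →
    (∀ x ∈ s, ∀ y ∈ s, ∀ z ∈ s, H.Adj x y → H.Adj x z → ¬ H.Adj y z) →
    (∀ σ, IsM H s σ → σ.support.card ≤ 2 * ν) →
    ∃ t ⊆ s, s.card ≤ t.card + ν + ν / 2 ∧ ∀ x ∈ t, ∀ y ∈ t, ¬ H.Adj x y := by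
  classical
  induction n using Nat.strong_induction_on with
  | _ n ih =>
  intro s ν hn hν htf hmax
  by_cases hcrit : ∃ v ∈ s, 1 ≤ ν ∧ ∀ σ, IsM H (s.erase v) σ → σ.support.card ≤ 2 * (ν - 1)
  · obtain ⟨v, hv, h1, h2⟩ := hcrit
    have hc := Finset.card_erase_of_mem hv
    have hp := Finset.card_pos.2 ⟨v, hv⟩
    obtain ⟨t, ht, htc, hti⟩ := ih (n - 1) (by omega) (s.erase v) (ν - 1) (by omega) (by omega)
      (fun x hx y hy z hz => htf x (mem_of_mem_erase hx) y (mem_of_mem_erase hy) z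
        (mem_of_mem_erase hz)) h2
    exact ⟨t, ht.trans (Finset.erase_subset _ _), by omega, hti⟩
  push Not at hcrit
  have miss : ∀ v ∈ s, ∃ N, IsM H s N ∧ N.support.card = 2 * ν ∧ N v = v := by
    intro v hv
    by_cases h0 : ν = 0
    · exact ⟨1, IsM.one H s, by simp [h0], by simp⟩
    · obtain ⟨N, hN, hNc⟩ := hcrit v hv (by omega)
      have hN' := hN.mono (Finset.erase_subset v s)
      have h1 := hmax N hN'
      obtain ⟨k, hk⟩ := hN.even
      refine ⟨N, hN', by omega, ?_⟩
      by_contra h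
      exact absurd (hN.2 v h).1 (by simp)
  rcases s.eq_empty_or_nonempty with rfl | ⟨u, hu⟩
  · exact ⟨∅, by simp, by simp, by simp⟩
  let R : V → V → Prop := fun a b =>
    a = b ∨ ∀ N, IsM H s N → N.support.card = 2 * ν → N a = a → N b ≠ b
  have Rsymm : ∀ a b, R a b → R b a := by
    rintro a b (h | h)
    · exact Or.inl h.symm
    · exact Or.inr fun N h1 h2 h3 h4 => h N h1 h2 h4 h3
  have Rtrans : ∀ a b c, b ∈ s → R a b → R b c → R a c := by
    intro a b c hb hab hbc
    by_cases hac : a = c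
    · exact Or.inl hac
    rcases Rsymm _ _ hab with rfl | hab
    · exact hbc
    rcases hbc with rfl | hbc
    · exact Rsymm _ _ (Or.inr hab)
    right
    intro M hM hMc hMa hMb
    exact gallai_trans hmax hM hMc hac hMa hMb (miss b hb) hab hbc
  have Radj : ∀ a ∈ s, ∀ b ∈ s, H.Adj a b → R a b := by
    intro a ha b hb hab
    right
    intro N hN hNc h1 h2
    obtain ⟨τ, hτ, hτc⟩ := hN.extend ha hb hab h1 h2
    have := hmax τ hτ
    omega
  by_cases hall : ∀ v ∈ s, R u v
  · obtain ⟨N, hN, hNc, hNu⟩ := miss u hu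
    have hsupp : N.support = s.erase u := by
      ext x
      simp only [Equiv.Perm.mem_support, mem_erase]
      constructor
      · intro hx
        exact ⟨fun h => hx (h ▸ hNu), (hN.2 x hx).1⟩
      · rintro ⟨hx, hxs⟩
        rcases hall x hxs with h | h
        · exact absurd h.symm hx
        · exact h N hN hNc hNu
    have hc := Finset.card_erase_of_mem hu
    have hp := Finset.card_pos.2 ⟨u, hu⟩
    rw [← hsupp, hNc] at hc
    obtain ⟨t, ht, htc, hti⟩ := ramsey H (ν + 1 - ν / 2) s htf (by
      interval_cases ν <;> omega)
    exact ⟨t, ht, by omega, hti⟩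
  · push Not at hall
    obtain ⟨w, hw, hRw⟩ := hall
    let A := s.filter (fun v => R u v)
    let B := s.filter (fun v => ¬ R u v)
    have hA : A ⊆ s := Finset.filter_subset _ _
    have hB : B ⊆ s := Finset.filter_subset _ _
    have hAB : A.card + B.card = s.card := Finset.card_filter_add_card_filter_not _
    have hAp : 0 < A.card := Finset.card_pos.2 ⟨u, mem_filter.2 ⟨hu, Or.inl rfl⟩⟩
    have hBp : 0 < B.card := Finset.card_pos.2 ⟨w, mem_filter.2 ⟨hw, hRw⟩⟩
    have hnadj : ∀ a ∈ A, ∀ b ∈ B, ¬ H.Adj a b := by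
      intro a ha b hb hab
      have ha' := mem_filter.1 ha
      have hb' := mem_filter.1 hb
      exact hb'.2 (Rtrans u a b ha'.1 ha'.2 (Radj a ha'.1 b hb'.1 hab))
    obtain ⟨α, σ, hσ, hσc, hσm⟩ := exists_max_matching H A
    obtain ⟨β, τ, hτ, hτc, hτm⟩ := exists_max_matching H B
    have hd : Equiv.Perm.Disjoint σ τ := by
      intro x
      by_contra h
      push Not at h
      exact (mem_filter.1 (hτ.2 x h.2).1).2 (mem_filter.1 (hσ.2 x h.1).1).2
    have hsum := hmax _ ((hσ.mono hA).mul (hτ.mono hB) hd)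
    rw [hd.card_support_mul, hσc, hτc] at hsum
    obtain ⟨t1, ht1, ht1c, ht1i⟩ := ih A.card (by omega) A α rfl (by omega)
      (fun x hx y hy z hz => htf x (hA hx) y (hA hy) z (hA hz)) hσm
    obtain ⟨t2, ht2, ht2c, ht2i⟩ := ih B.card (by omega) B β rfl (by omega)
      (fun x hx y hy z hz => htf x (hB hx) y (hB hy) z (hB hz)) hτm
    have hdis : Disjoint t1 t2 := by
      rw [Finset.disjoint_left]
      intro x h1 h2
      exact (mem_filter.1 (ht2 h2)).2 (mem_filter.1 (ht1 h1)).2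
    refine ⟨t1 ∪ t2, Finset.union_subset (ht1.trans hA) (ht2.trans hB), ?_, ?_⟩
    · rw [Finset.card_union_of_disjoint hdis]; omega
    · intro x hx y hy
      rcases mem_union.1 hx with hx | hx <;> rcases mem_union.1 hy with hy | hy
      · exact ht1i x hx y hy
      · exact hnadj x (ht1 hx) y (ht2 hy)
      · exact fun h => hnadj y (ht1 hy) x (ht2 hx) h.symm
      · exact ht2i x hx y hy

theorem lower (G : SimpleGraph V) (d : ℕ) : ∀ (s : Finset V) (m : ℕ), d ≤ 4 →
    s.card ≤ m + 2 * d → ¬ ColS G s m →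
    ∃ t ⊆ s, m + 2 ≤ t.card + d ∧ ∀ x ∈ t, ∀ y ∈ t, x ≠ y → G.Adj x y := by
  classical
  induction d with
  | zero =>
    intro s m _ h1 h2
    exact absurd (col_mono (by omega) (col_card G s)) h2
  | succ d ih =>
    intro s m hd hs hcol
    by_cases htri : ∀ x ∈ s, ∀ y ∈ s, ∀ z ∈ s, Gᶜ.Adj x y → Gᶜ.Adj x z → ¬ Gᶜ.Adj y z
    · have hlt : m < s.card := by
        by_contra h
        exact hcol (col_mono (by omega) (col_card G s))
      obtain ⟨t, ht, htc, hti⟩ := matching_main Gᶜ s.card s (s.card - m - 1) rfl (by omega) htri (by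
        intro σ hσ
        obtain ⟨k, hk⟩ := hσ.even
        by_contra hcon
        apply hcol
        have hf : s.filter (fun x => σ x ≠ x) = σ.support := by
          ext x
          simp only [mem_filter, Equiv.Perm.mem_support]
          exact ⟨fun h => h.2, fun h => ⟨(hσ.2 x h).1, h⟩⟩
        refine col_mono ?_ (col_matching G σ hσ.1 (fun x hx => ((SimpleGraph.compl_adj G x (σ x)).1 (hσ.2 x hx).2).2) k s ?_ ?_)
        · omega
        · intro x hx
          by_cases h : σ x = x
          · rwa [h]
          · exact (hσ.2 (σ x) (by rw [hσ.1]; exact fun h' => h h'.symm)).1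
        · rw [hf, hk])
      refine ⟨t, ht, by omega, ?_⟩
      intro x hx y hy hxy
      by_contra h
      exact hti x hx y hy ((SimpleGraph.compl_adj G x y).2 ⟨hxy, h⟩)
    · push Not at htri
      obtain ⟨x, hx, y, hy, z, hz, hxy, hxz, hyz⟩ := htri
      rw [SimpleGraph.compl_adj] at hxy hxz hyz
      have c3 : ({x, y, z} : Finset V).card = 3 :=
        Finset.card_eq_three.2 ⟨x, y, z, hxy.1, hxz.1, hyz.1, rfl⟩
      have hsub : ({x, y, z} : Finset V) ⊆ s := by
        intro w hw
        simp only [mem_insert, mem_singleton] at hw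
        rcases hw with rfl | rfl | rfl <;> assumption
      have hind : ∀ a ∈ ({x, y, z} : Finset V), ∀ b ∈ ({x, y, z} : Finset V), ¬ G.Adj a b := by
        intro a ha b hb
        simp only [mem_insert, mem_singleton] at ha hb
        have := G.adj_comm
        rcases ha with rfl | rfl | rfl <;> rcases hb with rfl | rfl | rfl <;>
          first | exact G.loopless.irrefl _ | tauto | (rw [G.adj_comm]; tauto)
      have hcs := Finset.card_sdiff_of_subset hsub
      have hle := Finset.card_le_card hsub
      rcases Nat.eq_zero_or_pos m with rfl | hm
      · exact ⟨{x}, by simpa using hx, by rw [Finset.card_singleton]; omega, by simp⟩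
      obtain ⟨m, rfl⟩ : ∃ m', m = m' + 1 := ⟨m - 1, by omega⟩
      obtain ⟨t, ht, htc, hti⟩ := ih (s \ {x, y, z}) m (by omega) (by omega)
        (fun h => hcol (col_add hind h))
      exact ⟨t, ht.trans Finset.sdiff_subset, by omega, hti⟩

end

theorem chrom_iff {V : Type} (G : SimpleGraph V) (r : ℕ) :
    (r + 1 : ℕ∞) ≤ G.chromaticNumber ↔ ¬ G.Colorable r := by
  rw [← SimpleGraph.chromaticNumber_le_iff_colorable, not_le]
  exact Order.add_one_le_iff_of_not_isMax (by simp)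

theorem lower_bound (r : ℕ) (hr : 8 ≤ r) (V : Type) [Fintype V] (G : SimpleGraph V)
    (hcf : G.CliqueFree (r - 2)) (hch : (r + 1 : ℕ∞) ≤ G.chromaticNumber) :
    r + 9 ≤ Fintype.card V := by
  classical
  rw [chrom_iff] at hch
  by_contra hlt
  obtain ⟨t, -, htc, hti⟩ := lower G 4 univ r le_rfl (by rw [Finset.card_univ]; omega) (by
    rintro ⟨c, h1, h2⟩
    apply hch
    exact ⟨SimpleGraph.Coloring.mk (fun v => (⟨c v, h1 v (mem_univ _)⟩ : Fin r)) (by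
      intro a b hab h
      exact h2 a (mem_univ _) b (mem_univ _) hab (by simpa using h))⟩)
  obtain ⟨t', ht', htc'⟩ := Finset.exists_subset_card_eq (show r - 2 ≤ t.card by omega)
  refine hcf t' ⟨?_, htc'⟩
  intro a ha b hb hab
  exact hti a (ht' ha) b (ht' hb) hab

/-- Adding a universal vertex. -/
def cone {V : Type} (G : SimpleGraph V) : SimpleGraph (Option V) where
  Adj a b := match a, b with
    | none, none => False
    | none, some _ => True
    | some _, none => True
    | some x, some y => G.Adj x y
  symm := ⟨by
    intro a b h
    cases a <;> cases b <;> first | exact h | exact SimpleGraph.Adj.symm h⟩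
  loopless := ⟨by
    intro a h
    cases a
    · exact h
    · exact G.loopless.irrefl _ h⟩

theorem cone_cliqueFree {V : Type} (G : SimpleGraph V) (q : ℕ) (h : G.CliqueFree q) :
    (cone G).CliqueFree (q + 1) := by
  classical
  intro t ht
  have h1 : q ≤ (Finset.eraseNone t).card := by
    have := Finset.card_eraseNone_le (s := t)
    have h2 : t ⊆ insert none ((Finset.eraseNone t).map Function.Embedding.some) := by
      intro x hx
      cases x <;> simp [hx]
    have h3 := (Finset.card_le_card h2).trans (Finset.card_insert_le _ _)
    rw [Finset.card_map, ht.card_eq] at h3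
    omega
  obtain ⟨t', ht', hc⟩ := Finset.exists_subset_card_eq h1
  refine h t' ⟨?_, hc⟩
  intro a ha b hb hab
  have ha' := Finset.mem_eraseNone.1 (ht' ha)
  have hb' := Finset.mem_eraseNone.1 (ht' hb)
  exact ht.isClique ha' hb' (by simpa using hab)

theorem cone_colorable {V : Type} (G : SimpleGraph V) (r : ℕ) (h : ¬ G.Colorable r) :
    ¬ (cone G).Colorable (r + 1) := by
  rintro ⟨c⟩
  apply h
  have hne : ∀ v, c (some v) ≠ c none := fun v =>
    c.valid (show (cone G).Adj (some v) none from trivial)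
  let c' : G.Coloring {x : Fin (r + 1) // x ≠ c none} :=
    SimpleGraph.Coloring.mk (fun v => ⟨c (some v), hne v⟩) (by
      intro a b hab h
      exact c.valid (show (cone G).Adj (some a) (some b) from hab) (by simpa using h))
  have := c'.colorable
  simpa using this

/-- Adjacency masks of a triangle-free graph on 17 vertices without independent 6-sets. -/
def mask : List ℕ := [72000, 74624, 83472, 101408, 6308, 8536, 17057, 33874, 33827, 6214, 8588, 16921, 41489, 21538, 43076, 20872, 15]

/-- Adjacency in the base graph. -/
def adjB (i j : ℕ) : Bool := (mask.getD i 0).testBit j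

theorem adjB_symm : ∀ i : Fin 17, ∀ j : Fin 17, adjB i j = adjB j i := by decide +kernel

/-- The complement of the Ramsey graph. -/
def base : SimpleGraph (Fin 17) where
  Adj i j := i ≠ j ∧ adjB i j = false
  symm := ⟨fun i j h => ⟨h.1.symm, by rw [adjB_symm]; exact h.2⟩⟩
  loopless := ⟨fun i h => h.1 rfl⟩

theorem tri_check : ∀ i : Fin 17, ∀ j : Fin 17, adjB i j = true →
    ∀ k : Fin 17, adjB i k = true → adjB j k = false := by decide +kernel

theorem clique_check : ∀ a : Fin 17, ∀ b : Fin 17, (a < b ∧ adjB a b = false) →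
    ∀ c : Fin 17, (b < c ∧ adjB a c = false ∧ adjB b c = false) →
    ∀ d : Fin 17, (c < d ∧ adjB a d = false ∧ adjB b d = false ∧ adjB c d = false) →
    ∀ e : Fin 17, (d < e ∧ adjB a e = false ∧ adjB b e = false ∧ adjB c e = false ∧
      adjB d e = false) →
    ∀ f : Fin 17, ¬ (e < f ∧ adjB a f = false ∧ adjB b f = false ∧ adjB c f = false ∧
      adjB d f = false ∧ adjB e f = false) := by
  set_option synthInstance.maxHeartbeats 200000 in
  decide +kernel

theorem base_cliqueFree : base.CliqueFree 6 := by
  intro t ht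
  let f := t.orderEmbOfFin ht.card_eq
  have hlt : ∀ i j : Fin 6, i < j → f i < f j := fun i j h => f.strictMono h
  have hadj : ∀ i j : Fin 6, i < j → adjB (f i) (f j) = false := fun i j h =>
    (ht.isClique (Finset.orderEmbOfFin_mem t ht.card_eq i)
      (Finset.orderEmbOfFin_mem t ht.card_eq j) (hlt i j h).ne).2
  refine clique_check (f 0) (f 1) ⟨?_, ?_⟩ (f 2) ⟨?_, ?_, ?_⟩ (f 3) ⟨?_, ?_, ?_, ?_⟩
    (f 4) ⟨?_, ?_, ?_, ?_, ?_⟩ (f 5) ⟨?_, ?_, ?_, ?_, ?_, ?_⟩ <;>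
    first | exact hlt _ _ (by decide) | exact hadj _ _ (by decide)

theorem base_colorable : ¬ base.Colorable 8 := by
  rintro ⟨c⟩
  obtain ⟨y, -, hy⟩ := Finset.exists_lt_card_fiber_of_mul_lt_card_of_maps_to
    (s := (univ : Finset (Fin 17))) (t := (univ : Finset (Fin 8))) (f := c) (n := 2)
    (fun _ _ => mem_univ _) (by simp)
  obtain ⟨i, hi, j, hj, k, hk, hij, hik, hjk⟩ := Finset.two_lt_card.1 hy
  simp only [mem_filter, mem_univ, true_and] at hi hj hk
  have key : ∀ a b : Fin 17, a ≠ b → c a = c b → adjB a b = true := by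
    intro a b hab hc
    by_contra h
    exact c.valid (show base.Adj a b from ⟨hab, by simpa using h⟩) hc
  have h1 := tri_check i j (key i j hij (hi.trans hj.symm)) k (key i k hik (hi.trans hk.symm))
  rw [key j k hjk (hj.trans hk.symm)] at h1
  exact absurd h1 (by simp)

theorem exists_graph (m : ℕ) : ∃ G : SimpleGraph (Fin (17 + m)),
    G.CliqueFree (6 + m) ∧ ¬ G.Colorable (8 + m) := by
  induction m with
  | zero => exact ⟨base, base_cliqueFree, base_colorable⟩
  | succ m ih =>
    obtain ⟨G, h1, h2⟩ := ih
    let e : Fin (17 + (m + 1)) ≃ Option (Fin (17 + m)) := finSuccEquiv (17 + m)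
    let I : (cone G).comap e ≃g cone G := SimpleGraph.Iso.comap e (cone G)
    refine ⟨(cone G).comap e, ?_, ?_⟩
    · exact (cone_cliqueFree G _ h1).comap ⟨I.toEmbedding.toCopy⟩
    · intro h
      exact cone_colorable G _ h2 (h.of_hom I.symm.toHom)

end FolkmanAux

theorem stmt_4 (r : ℕ) (hr : 8 ≤ r) :
    (∀ (V : Type) [Fintype V] (G : SimpleGraph V),
        G.CliqueFree (r - 2) → (r + 1 : ℕ∞) ≤ G.chromaticNumber →
        r + 9 ≤ Fintype.card V) ∧
    (∃ G : SimpleGraph (Fin (r + 9)),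
        G.CliqueFree (r - 2) ∧ (r + 1 : ℕ∞) ≤ G.chromaticNumber) ∧
    folkman r (r - 2) = r + 9 := by
  have hlow := FolkmanAux.lower_bound r hr
  have hex : ∃ G : SimpleGraph (Fin (r + 9)),
      G.CliqueFree (r - 2) ∧ (r + 1 : ℕ∞) ≤ G.chromaticNumber := by
    obtain ⟨G, h1, h2⟩ := FolkmanAux.exists_graph (r - 8)
    have e1 : 17 + (r - 8) = r + 9 := by omega
    have e2 : 6 + (r - 8) = r - 2 := by omega
    have e3 : 8 + (r - 8) = r := by omega
    rw [e2] at h1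
    rw [e3] at h2
    rw [← e1]
    exact ⟨G, h1, (FolkmanAux.chrom_iff G r).2 h2⟩
  refine ⟨hlow, hex, ?_⟩
  apply le_antisymm
  · exact Nat.sInf_le hex
  · have hne : {n : ℕ | ∃ G : SimpleGraph (Fin n),
        G.CliqueFree (r - 2) ∧ (r + 1 : ℕ∞) ≤ G.chromaticNumber}.Nonempty := ⟨r + 9, hex⟩
    apply le_csInf hne
    rintro n ⟨G, h1, h2⟩
    simpa using hlow (Fin n) G h1 h2
end
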